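/- Let A be a unital C*-algebra with a faithful state g. Then for every positive element y ∈ A, the norm of y is given by the formula ‖y‖_A = sup { g(c y c) / g(c²) : c ∈ A, c ≥ 0, c ≠ 0 }. (Note that g(c²) > 0 for every nonzero positive c by faithfulness of g.) -/

import Mathlib

open scoped ComplexOrder

/-- Let `A` be a unital C*-algebra with a faithful state `g`. Then for every
positive element `y` of `A`, the norm of `y` is given by
`‖y‖ = sup { g (c * y * c) / g (c * c) : c ∈ A, c ≥ 0, c ≠ 0 }`. -/
theorem norm_eq_sSup_state_quotients
    {A : Type*} [CStarAlgebra A] [PartialOrder A] [StarOrderedRing A]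
    -- `g` is a state on `A`: a positive linear functional with `g 1 = 1` …
    (g : A →L[ℂ] ℂ) (hg_one : g 1 = 1)
    (hg_pos : ∀ a : A, 0 ≤ g (star a * a))
    -- … which is faithful:
    (hg_faithful : ∀ a : A, g (star a * a) = 0 → a = 0)
    (y : A) (hy : 0 ≤ y) :
    ‖y‖ = sSup {r : ℝ | ∃ c : A, 0 ≤ c ∧ c ≠ 0 ∧ (r : ℂ) = g (c * y * c) / g (c * c)} := by
  have hmono : ∀ a b : A, a ≤ b → g a ≤ g b := by
    intro a b hab
    obtain ⟨x, hx⟩ := CStarAlgebra.nonneg_iff_eq_star_mul_self.mp (sub_nonneg.mpr hab)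
    have := hg_pos x
    rw [← hx, map_sub] at this
    exact sub_nonneg.mp this
  have : Nontrivial A := ⟨⟨1, 0, fun h => by simp [h] at hg_one⟩⟩
  have hsq : ∀ c : A, 0 ≤ c → c ≠ 0 → 0 < g (c * c) := by
    intro c hc hc0
    have hs : star c = c := (IsSelfAdjoint.of_nonneg hc).star_eq
    have h1 := hg_pos c
    have h2 := hg_faithful c
    rw [hs] at h1 h2
    exact lt_of_le_of_ne h1 (fun h => hc0 (h2 h.symm))
  have hsm : ∀ (w : ℝ) (a : A), g (w • a) = (w : ℂ) * g a := by
    intro w a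
    rw [← Complex.coe_smul, map_smul, smul_eq_mul]
  have hreal : ∀ c : A, 0 ≤ c → c ≠ 0 →
      ∃ r : ℝ, (r : ℂ) = g (c * y * c) / g (c * c) := by
    intro c hc hc0
    have h1 := hsq c hc hc0
    have h2 : 0 ≤ g (c * y * c) := by
      have := hmono _ _ (conjugate_le_conjugate_of_nonneg hy hc)
      simpa using this
    refine ⟨(g (c * y * c)).re / (g (c * c)).re, ?_⟩
    rw [Complex.ofReal_div, ← Complex.eq_re_of_ofReal_le (r := 0) (by simpa using h2),
      ← Complex.eq_re_of_ofReal_le (r := 0) (by simpa using h1.le)]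
  symm
  apply csSup_eq_of_forall_le_of_forall_lt_exists_gt
  · obtain ⟨r, hr⟩ := hreal 1 zero_le_one one_ne_zero
    exact ⟨r, 1, zero_le_one, one_ne_zero, hr⟩
  · rintro r ⟨c, hc, hc0, hr⟩
    have h1 := hsq c hc hc0
    rw [eq_div_iff h1.ne'] at hr
    have h3 : c * y * c ≤ ‖y‖ • (c * c) := by
      have := conjugate_le_conjugate_of_nonneg
        (IsSelfAdjoint.le_algebraMap_norm_self (.of_nonneg hy)) hc
      simpa [Algebra.algebraMap_eq_smul_one] using this
    have h4 := hmono _ _ h3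
    rw [← hr, hsm] at h4
    exact_mod_cast le_of_mul_le_mul_right h4 h1
  · intro w hw
    obtain ⟨v, hwv, hv⟩ := exists_between hw
    set f : ℝ → ℝ := fun t => max (t - v) 0 with hf
    have hfc : Continuous f := by fun_prop
    have hysa : IsSelfAdjoint y := .of_nonneg hy
    have hc : 0 ≤ cfc f y := cfc_nonneg (fun x _ => le_max_right _ _)
    have hc0 : cfc f y ≠ 0 := by
      intro h
      have hm := cfc_map_spectrum (R := ℝ) f y hysa hfc.continuousOn
      have hmem : f ‖y‖ ∈ spectrum ℝ (cfc f y) := by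
        rw [hm]
        exact ⟨_, CStarAlgebra.norm_mem_spectrum_of_nonneg hy, rfl⟩
      rw [h, spectrum.zero_eq] at hmem
      have : f ‖y‖ = 0 := hmem
      simp only [hf, max_eq_right_iff] at this
      linarith
    obtain ⟨r, hr⟩ := hreal _ hc hc0
    refine ⟨r, ⟨_, hc, hc0, hr⟩, lt_of_lt_of_le hwv ?_⟩
    have h1 := hsq _ hc hc0
    rw [eq_div_iff h1.ne'] at hr
    have h3 : v • (cfc f y * cfc f y) ≤ cfc f y * y * cfc f y := by
      have e1 : v • (cfc f y * cfc f y) = cfc (fun t => v • (f t * f t)) y := by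
        rw [cfc_smul v (fun t => f t * f t) y, cfc_mul f f y]
      have e2 : cfc f y * y * cfc f y = cfc (fun t => f t * t * f t) y := by
        rw [cfc_mul (fun t => f t * t) f y, cfc_mul f (fun t => t) y, cfc_id' ℝ y]
      rw [e1, e2]
      refine cfc_mono ?_ (by fun_prop) (by fun_prop)
      intro t _
      simp only [hf, smul_eq_mul]
      rcases le_total (t - v) 0 with h | h
      · simp [max_eq_right h]
      · rw [max_eq_left h]
        nlinarith [mul_nonneg (mul_nonneg h h) h]
    have h4 := hmono _ _ h3
    rw [← hr, hsm] at h4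
    exact_mod_cast le_of_mul_le_mul_right h4 h1
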